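/- arXiv:2010.13248 — 3 statements merged into one kernel-verified Lean document; each statement's English description precedes it below -/
import Mathlib

section
/- Let V ⊆ ℝⁿ, V_i ⊆ ℝ^{m_i}, and V_j ⊆ ℝ^{m_j} be subsets, and let φ_i : ℝⁿ → ℝ^{m_i} and φ_j : ℝⁿ → ℝ^{m_j} be maps that are locally smoothly extendable on V, restrict to bijections of V onto V_i and of V onto V_j respectively, and admit maps σ_i : ℝ^{m_i} → ℝⁿ and σ_j : ℝ^{m_j} → ℝⁿ locally smoothly extendable on V_i and V_j respectively with σ_i(φ_i(x)) = x and σ_j(φ_j(x)) = x for all x ∈ V. Then the transition map φ_i ∘ σ_j is locally smoothly extendable on V_j: for every z ∈ V_j there exist an open set W ⊆ ℝ^{m_j} with z ∈ W and a C^∞ map Φ : ℝ^{m_j} → ℝ^{m_i} agreeing with φ_i ∘ σ_j on W ∩ V_j. -/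
/-- A function `f : ℝⁿ → ℝ` is locally smoothly extendable on `V ⊆ ℝⁿ` if
for every `x ∈ V` there are an open set `W ∋ x` and a `C^∞` function
`F : ℝⁿ → ℝ` with `f = F` on `W ∩ V`. -/
def LocSmoothExtFun {n : ℕ} (V : Set (Fin n → ℝ)) (f : (Fin n → ℝ) → ℝ) : Prop :=
  ∀ x ∈ V, ∃ W : Set (Fin n → ℝ), IsOpen W ∧ x ∈ W ∧
    ∃ F : (Fin n → ℝ) → ℝ, ContDiff ℝ (⊤ : ℕ∞) F ∧ ∀ y ∈ W ∩ V, f y = F y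

/-- A map `ψ : ℝⁿ → ℝᵐ` is locally smoothly extendable on `V ⊆ ℝⁿ` if
for every `x ∈ V` there are an open set `W ∋ x` and a `C^∞` map
`Ψ : ℝⁿ → ℝᵐ` with `ψ = Ψ` on `W ∩ V`. -/
def LocSmoothExtMap {n m : ℕ} (V : Set (Fin n → ℝ))
    (ψ : (Fin n → ℝ) → (Fin m → ℝ)) : Prop :=
  ∀ x ∈ V, ∃ W : Set (Fin n → ℝ), IsOpen W ∧ x ∈ W ∧
    ∃ Ψ : (Fin n → ℝ) → (Fin m → ℝ), ContDiff ℝ (⊤ : ℕ∞) Ψ ∧ ∀ y ∈ W ∩ V, ψ y = Ψ y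

/-- Chart transition maps between two charts of a differential subspace of
`ℝⁿ` are locally smoothly extendable (Proposition 2(a)). -/
theorem stmt_3 {n mi mj : ℕ} (V : Set (Fin n → ℝ))
    (Vi : Set (Fin mi → ℝ)) (Vj : Set (Fin mj → ℝ))
    (φi : (Fin n → ℝ) → (Fin mi → ℝ)) (φj : (Fin n → ℝ) → (Fin mj → ℝ))
    (hφi : LocSmoothExtMap V φi) (hφj : LocSmoothExtMap V φj)
    (hbi : Set.BijOn φi V Vi) (hbj : Set.BijOn φj V Vj)
    (σi : (Fin mi → ℝ) → (Fin n → ℝ)) (σj : (Fin mj → ℝ) → (Fin n → ℝ))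
    (hσi : LocSmoothExtMap Vi σi) (hσj : LocSmoothExtMap Vj σj)
    (hli : ∀ x ∈ V, σi (φi x) = x) (hlj : ∀ x ∈ V, σj (φj x) = x) :
    ∀ z ∈ Vj, ∃ W : Set (Fin mj → ℝ), IsOpen W ∧ z ∈ W ∧
      ∃ Φ : (Fin mj → ℝ) → (Fin mi → ℝ), ContDiff ℝ (⊤ : ℕ∞) Φ ∧
        ∀ y ∈ W ∩ Vj, (φi ∘ σj) y = Φ y := by
  have hmem : ∀ y ∈ Vj, σj y ∈ V := by
    intro y hy
    obtain ⟨x, hx, rfl⟩ := hbj.surjOn hy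
    rw [hlj x hx]
    exact hx
  intro z hz
  obtain ⟨W, hW, hzW, S, hS, hSe⟩ := hσj z hz
  obtain ⟨U, hU, hzU, F, hF, hFe⟩ := hφi (σj z) (hmem z hz)
  refine ⟨W ∩ S ⁻¹' U, hW.inter (hU.preimage hS.continuous), ⟨hzW, ?_⟩, F ∘ S,
    hF.comp hS, ?_⟩
  · rw [Set.mem_preimage, ← hSe z ⟨hzW, hz⟩]
    exact hzU
  · rintro y ⟨⟨hyW, hyU⟩, hy⟩
    have e := hSe y ⟨hyW, hy⟩
    rw [Set.mem_preimage, ← e] at hyU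
    simp only [Function.comp_apply]
    rw [← e]
    exact hFe _ ⟨hyU, hmem y hy⟩
end

section
/- Let V₁ ⊆ ℝⁿ and V₂ ⊆ ℝᵐ be subsets and let χ : ℝⁿ → ℝᵐ be a map with χ(V₁) ⊆ V₂ such that for every function g : ℝᵐ → ℝ that is locally smoothly extendable on V₂, the composition g ∘ χ is locally smoothly extendable on V₁. Then χ is locally smoothly extendable on V₁: for every x ∈ V₁ there exist an open set W ⊆ ℝⁿ with x ∈ W and a C^∞ map X : ℝⁿ → ℝᵐ agreeing with χ on W ∩ V₁. -/
/-- A map that pulls back locally smoothly extendable functions to locally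
smoothly extendable functions is itself locally smoothly extendable
(Proposition 3 for differential subspaces of Euclidean spaces). -/
theorem stmt_6 {n m : ℕ} (V₁ : Set (Fin n → ℝ)) (V₂ : Set (Fin m → ℝ))
    (χ : (Fin n → ℝ) → (Fin m → ℝ)) (hmaps : Set.MapsTo χ V₁ V₂)
    (hyp : ∀ g : (Fin m → ℝ) → ℝ, LocSmoothExtFun V₂ g →
      LocSmoothExtFun V₁ (g ∘ χ)) :
    LocSmoothExtMap V₁ χ := by
  intro x hx
  have h : ∀ i : Fin m, LocSmoothExtFun V₁ ((fun y : Fin m → ℝ => y i) ∘ χ) := fun i =>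
    hyp _ (fun z _ => ⟨Set.univ, isOpen_univ, Set.mem_univ z, fun y => y i,
      contDiff_apply ℝ ℝ i, fun _ _ => rfl⟩)
  choose W hWo hxW F hF hFe using fun i => h i x hx
  exact ⟨⋂ i, W i, isOpen_iInter_of_finite hWo, Set.mem_iInter.2 hxW, fun y i => F i y,
    contDiff_pi.2 hF, fun y hy => funext fun i => hFe i y ⟨Set.mem_iInter.1 hy.1 i, hy.2⟩⟩
end

section
/- Let V₁ ⊆ ℝⁿ and V₂ ⊆ ℝᵐ be subsets and let χ : ℝⁿ → ℝᵐ be a map with χ(V₁) ⊆ V₂. Then the following are equivalent: (i) for every function g : ℝᵐ → ℝ that is locally smoothly extendable on V₂, the composition g ∘ χ is locally smoothly extendable on V₁; (ii) χ is locally smoothly extendable on V₁, i.e., for every x ∈ V₁ there exist an open set W ⊆ ℝⁿ with x ∈ W and a C^∞ map X : ℝⁿ → ℝᵐ agreeing with χ on W ∩ V₁. -/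
/-- Sikorski smoothness and Aronszajn smoothness coincide for maps between
differential subspaces of Euclidean spaces (Theorem 6). -/
theorem stmt_7 {n m : ℕ} (V₁ : Set (Fin n → ℝ)) (V₂ : Set (Fin m → ℝ))
    (χ : (Fin n → ℝ) → (Fin m → ℝ)) (hmaps : Set.MapsTo χ V₁ V₂) :
    (∀ g : (Fin m → ℝ) → ℝ, LocSmoothExtFun V₂ g →
      LocSmoothExtFun V₁ (g ∘ χ)) ↔ LocSmoothExtMap V₁ χ := by
  constructor
  · intro h x hx
    have key : ∀ i : Fin m, ∃ W : Set (Fin n → ℝ), IsOpen W ∧ x ∈ W ∧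
        ∃ F : (Fin n → ℝ) → ℝ, ContDiff ℝ (⊤ : ℕ∞) F ∧ ∀ y ∈ W ∩ V₁, χ y i = F y := by
      intro i
      exact h (fun z => z i) (fun z _ => ⟨Set.univ, isOpen_univ, Set.mem_univ z,
        fun z => z i, contDiff_apply ℝ ℝ i, fun _ _ => rfl⟩) x hx
    choose W hW hxW F hF hFe using key
    refine ⟨⋂ i, W i, isOpen_iInter_of_finite hW, Set.mem_iInter.2 hxW,
      fun y i => F i y, contDiff_pi.2 hF, ?_⟩
    rintro y ⟨hy, hyV⟩
    funext i
    exact hFe i y ⟨Set.mem_iInter.1 hy i, hyV⟩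
  · intro h g hg x hx
    obtain ⟨W, hW, hxW, X, hX, hXe⟩ := h x hx
    obtain ⟨U, hU, hxU, G, hG, hGe⟩ := hg (χ x) (hmaps hx)
    refine ⟨W ∩ X ⁻¹' U, hW.inter (hU.preimage hX.continuous), ⟨hxW, ?_⟩,
      G ∘ X, hG.comp hX, ?_⟩
    · rw [Set.mem_preimage, ← hXe x ⟨hxW, hx⟩]
      exact hxU
    · rintro y ⟨⟨hyW, hyU⟩, hyV⟩
      have e := hXe y ⟨hyW, hyV⟩
      rw [Set.mem_preimage, ← e] at hyU
      rw [Function.comp_apply, Function.comp_apply, ← e]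
      exact hGe _ ⟨hyU, hmaps hyV⟩
end
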